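/- Fix an integer ℓ ≥ 3. Every n-vertex edge-colored graph (G,c) with no rainbow ℓ-cycle satisfies δ^c(G) ≤ n/2 + 3ℓ. -/

import Mathlib

open Finset

variable {V : Type*}

/-- Number of distinct colors on edges incident to `v`. -/
noncomputable def colorDeg (G : SimpleGraph V) (c : Sym2 V → ℕ) (v : V) : ℕ :=
  Set.ncard {α : ℕ | ∃ u, G.Adj u v ∧ c s(u, v) = α}

/-- Number of distinct colors `c({u,v})` over `u ∈ N(v) ∩ U`. -/
noncomputable def colorDegOn (G : SimpleGraph V) (c : Sym2 V → ℕ) (v : V) (U : Set V) : ℕ :=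
  Set.ncard {α : ℕ | ∃ u ∈ U, G.Adj u v ∧ c s(u, v) = α}

/-- Minimum color-degree `δ^c(G)`. -/
noncomputable def minColorDeg (G : SimpleGraph V) (c : Sym2 V → ℕ) : ℕ :=
  ⨅ v : V, colorDeg G c v

/-- `(G,c)` is edge-minimal: no proper spanning subgraph has the same minimum color-degree. -/
def EdgeMinimal (G : SimpleGraph V) (c : Sym2 V → ℕ) : Prop :=
  ∀ H : SimpleGraph V, H ≤ G → H ≠ G → minColorDeg H c ≠ minColorDeg G c

/-- `(G,c)` contains a rainbow cycle on `ℓ` vertices. -/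
def HasRainbowCycle (G : SimpleGraph V) (c : Sym2 V → ℕ) (ℓ : ℕ) : Prop :=
  ∃ (u : V) (p : G.Walk u u), p.IsCycle ∧ p.length = ℓ ∧ (p.edges.map c).Nodup

/-- There is a rainbow path from `v` to `y` on `k` vertices whose edge colors avoid `C`. -/
def RainbowPathAvoiding (G : SimpleGraph V) (c : Sym2 V → ℕ) (v y : V) (k : ℕ)
    (C : Set ℕ) : Prop :=
  ∃ p : G.Walk v y, p.IsPath ∧ p.length + 1 = k ∧ (p.edges.map c).Nodup ∧
    ∀ e ∈ p.edges, c e ∉ C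

/-- `σ_{v,X}(y)`: the number of colors `X`-separating `y` from `v`. -/
noncomputable def sepCount (G : SimpleGraph V) (c : Sym2 V → ℕ) (v : V) (X : Set V)
    (y : V) : ℕ :=
  Set.ncard {α : ℕ | ∃ x ∈ X, G.Adj x y ∧ c s(x, y) = α ∧ c s(v, x) ≠ α}

/-- `ρ_{v,X}(y)`: the number of colors restricted for `y` by `(v,X)`. -/
noncomputable def restrCount (G : SimpleGraph V) (c : Sym2 V → ℕ) (v : V) (X : Set V)
    (y : V) : ℕ :=
  Set.ncard {α : ℕ | (∃ x ∈ X, G.Adj x y ∧ c s(x, y) = α ∧ c s(v, x) ≠ α) ∧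
    ∀ w, G.Adj w y → w ∉ X → c s(w, y) ≠ α}

/-- The replication number `R(G,c) = max_{v,α} |N_α(v)|`. -/
noncomputable def repNum (G : SimpleGraph V) (c : Sym2 V → ℕ) : ℕ :=
  ⨆ v : V, ⨆ α : ℕ, Set.ncard {u : V | G.Adj u v ∧ c s(u, v) = α}

/-- `N_!(v)`: neighbors `u` of `v` whose color `c({u,v})` appears on exactly one edge at `v`. -/
def bangNbhd (G : SimpleGraph V) (c : Sym2 V → ℕ) (v : V) : Set V :=
  {u : V | G.Adj u v ∧ Set.ncard {w : V | G.Adj w v ∧ c s(w, v) = c s(u, v)} = 1}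

/- Let `R` be the replication number, attained by `R` edges of color `α` at a vertex `v`. Take `X`
to consist of these `R` neighbors together with a set `B` of one neighbor for each further color
at `v`. Many vertices `y` end a rainbow path `P` from `v` on `ℓ - 1` vertices that avoids `α`, and
a vertex `x ∈ X` off `P` with edges to `y` and `v` in colors new to `P` closes a rainbow `ℓ`-cycle
unless `c(xy) = c(xv)`. Hence almost every color at `y` seen inside `X` comes from some `x ∈ B` with
`c(xy) = c(xv)`, whereas a single `x` plays this role for at most `R` vertices `y`. Counting the
pairs `(x, y)` in both ways is contradictory when the minimum color-degree is large. -/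

lemma mul_lt_mul_of_add_le_add {a b x y : ℕ} (hx : a < x) (hy : a < y) (h : a + b ≤ x + y) :
    a * b < x * y := by
  -- `x y - a (x + y - a) = (x - a) (y - a) > 0`
  obtain ⟨s, rfl⟩ := Nat.exists_eq_add_of_lt hx
  obtain ⟨t, rfl⟩ := Nat.exists_eq_add_of_lt hy
  nlinarith

section ColorDegree

variable {G : SimpleGraph V} {c : Sym2 V → ℕ}

lemma minColorDeg_le_colorDeg (v : V) : minColorDeg G c ≤ colorDeg G c v :=
  ciInf_le (OrderBot.bddBelow _) v

lemma colorDeg_le_card_of_forall_mem {v : V} {C : Finset ℕ} (h : ∀ u, G.Adj u v → c s(u, v) ∈ C) :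
    colorDeg G c v ≤ #C := by
  rw [← Set.ncard_coe_finset]
  refine Set.ncard_le_ncard ?_ C.finite_toSet
  rintro _ ⟨u, hu, rfl⟩
  exact h u hu

lemma colorDeg_le_card_add_card {v : V} {S : Finset V} {C : Finset ℕ}
    (h : ∀ u, G.Adj u v → u ∈ S ∨ c s(u, v) ∈ C) : colorDeg G c v ≤ #S + #C := calc
  colorDeg G c v ≤ #(S.image (fun u => c s(u, v)) ∪ C) :=
    colorDeg_le_card_of_forall_mem fun u hu => mem_union.2 ((h u hu).imp_left (mem_image_of_mem _))
  _ ≤ #(S.image fun u => c s(u, v)) + #C := card_union_le _ _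
  _ ≤ #S + #C := Nat.add_le_add_right card_image_le _

lemma exists_injOn_color_ne [Finite V] (G : SimpleGraph V) (c : Sym2 V → ℕ) (v : V) (α : ℕ) :
    ∃ B : Finset V, (∀ x ∈ B, G.Adj x v ∧ c s(x, v) ≠ α) ∧
      Set.InjOn (fun x => c s(x, v)) B ∧ colorDeg G c v ≤ #B + 1 := by
  classical
  let N : Set V := {x | G.Adj x v ∧ c s(x, v) ≠ α}
  let f : V → ℕ := fun x => c s(x, v)
  obtain ⟨B, hBN, hBinj, hBimage⟩ := exists_subset_injOn_image_eq_of_surjOn N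
    (Set.toFinite (f '' N)).toFinset (f := f) (by simpa using Set.surjOn_image f N)
  refine ⟨B, hBN, hBinj, ?_⟩
  have hcolors : ∀ u, G.Adj u v → f u ∈ insert α (B.image f) := by
    intro u hu
    rw [mem_insert, hBimage, Set.Finite.mem_toFinset]
    exact or_iff_not_imp_left.2 fun hne => Set.mem_image_of_mem f ⟨hu, hne⟩
  calc colorDeg G c v ≤ #(insert α (B.image f)) := colorDeg_le_card_of_forall_mem hcolors
    _ ≤ #(B.image f) + 1 := card_insert_le _ _
    _ ≤ #B + 1 := Nat.add_le_add_right card_image_le _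

end ColorDegree

section ReplicationNumber

variable [Finite V] {G : SimpleGraph V} {c : Sym2 V → ℕ}

lemma bddAbove_range_ncard {ι : Type*} (s : ι → Set V) :
    BddAbove (Set.range fun i => (s i).ncard) :=
  ⟨Nat.card V, Set.forall_mem_range.2 fun i => Set.ncard_le_card (s i)⟩

lemma card_le_repNum {S : Finset V} {v : V} {α : ℕ}
    (h : ∀ u ∈ S, G.Adj u v ∧ c s(u, v) = α) : #S ≤ repNum G c := calc
  #S ≤ {u : V | G.Adj u v ∧ c s(u, v) = α}.ncard := by
    rw [← Set.ncard_coe_finset]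
    exact Set.ncard_le_ncard h
  _ ≤ ⨆ β : ℕ, {u : V | G.Adj u v ∧ c s(u, v) = β}.ncard :=
    le_ciSup (bddAbove_range_ncard fun β : ℕ => {u : V | G.Adj u v ∧ c s(u, v) = β}) α
  _ ≤ repNum G c := le_ciSup (f := fun w : V =>
    ⨆ β : ℕ, {u : V | G.Adj u w ∧ c s(u, w) = β}.ncard) (Set.finite_range _).bddAbove v

lemma exists_card_eq_repNum [Nonempty V] (G : SimpleGraph V) (c : Sym2 V → ℕ) :
    ∃ (v : V) (α : ℕ) (A : Finset V), (∀ x ∈ A, G.Adj x v ∧ c s(x, v) = α) ∧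
      #A = repNum G c := by
  obtain ⟨v, hv⟩ := exists_eq_ciSup_of_finite
    (f := fun w : V => ⨆ β : ℕ, {u : V | G.Adj u w ∧ c s(u, w) = β}.ncard)
  obtain ⟨α, hα⟩ := Nat.sSup_mem (Set.range_nonempty _)
    (bddAbove_range_ncard fun β : ℕ => {u : V | G.Adj u v ∧ c s(u, v) = β})
  let A := (Set.toFinite {u : V | G.Adj u v ∧ c s(u, v) = α}).toFinset
  refine ⟨v, α, A, fun x hx => by simpa [A] using hx, ?_⟩
  rw [← Set.ncard_eq_toFinset_card]
  exact hα.trans hv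

lemma card_mul_le_card_mul_repNum [DecidableRel G.Adj] {Y B : Finset V} {v : V} {m : ℕ}
    (h : ∀ y ∈ Y, m ≤ #{x ∈ B | G.Adj x y ∧ c s(x, y) = c s(x, v)}) :
    #Y * m ≤ #B * repNum G c := by
  refine card_mul_le_card_mul (fun y x => G.Adj x y ∧ c s(x, y) = c s(x, v)) h
    fun x _ => card_le_repNum (v := x) (α := c s(x, v)) fun y hy => ?_
  obtain ⟨-, hxy, hc⟩ := (mem_bipartiteBelow _).1 hy
  exact ⟨hxy.symm, by rwa [Sym2.eq_swap]⟩

end ReplicationNumber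

section RainbowPath

variable {G : SimpleGraph V} {c : Sym2 V → ℕ}

open SimpleGraph

lemma nodup_map_edges_concat {u v w : V} {p : G.Walk u v} {h : G.Adj v w} :
    ((p.concat h).edges.map c).Nodup ↔
      c s(v, w) ∉ p.edges.map c ∧ (p.edges.map c).Nodup := by
  rw [Walk.edges_concat, List.map_concat, List.nodup_concat]

lemma hasRainbowCycle_of_isPath {v x y : V} {p : G.Walk v y} (hp : p.IsPath)
    (hrainbow : (p.edges.map c).Nodup) (hx : x ∉ p.support) (hxv : G.Adj x v) (hxy : G.Adj x y)
    (hcv : c s(x, v) ∉ p.edges.map c) (hcy : c s(x, y) ∉ p.edges.map c)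
    (hne : c s(x, y) ≠ c s(x, v)) : HasRainbowCycle G c (p.length + 2) := by
  let q : G.Walk v x := p.concat hxy.symm
  have hq : (q.edges.map c).Nodup :=
    nodup_map_edges_concat.2 ⟨by rwa [Sym2.eq_swap], hrainbow⟩
  have hcq : c s(x, v) ∉ q.edges.map c := by
    rw [Walk.edges_concat, List.map_concat, Sym2.eq_swap (a := y)]
    simpa [hne.symm] using hcv
  refine ⟨x, q.cons hxv, ?_, by simp [q], ?_⟩
  · exact (Walk.cons_isCycle_iff _ _).2
      ⟨hp.concat hx hxy.symm, fun h => hcq (List.mem_map_of_mem h)⟩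
  · rw [Walk.edges_cons, List.map_cons]
    exact hq.cons hcq

lemma RainbowPathAvoiding.colorDeg_lt {v w : V} {k : ℕ} {C : Finset ℕ} {S : Finset V}
    (h : RainbowPathAvoiding G c v w k C)
    (hS : ∀ y, RainbowPathAvoiding G c v y (k + 1) C → y ∈ S) :
    colorDeg G c w < #S + 2 * k + #C := by
  classical
  obtain ⟨p, hp, rfl, hrainbow, hC⟩ := h
  have hcover : ∀ u, G.Adj u w →
      u ∈ S ∪ p.support.toFinset ∨ c s(u, w) ∈ (p.edges.map c).toFinset ∪ C := by
    intro u hu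
    by_contra! hnot
    simp only [mem_union, List.mem_toFinset, not_or] at hnot
    obtain ⟨⟨huS, hup⟩, hcp, hcC⟩ := hnot
    rw [Sym2.eq_swap] at hcp hcC
    refine huS (hS u ⟨p.concat hu.symm, hp.concat hup hu.symm, by simp,
      nodup_map_edges_concat.2 ⟨hcp, hrainbow⟩, fun e he => ?_⟩)
    rw [Walk.edges_concat, List.concat_eq_append, List.mem_append, List.mem_singleton] at he
    rcases he with he | rfl
    exacts [hC e he, hcC]
  have hcolors := colorDeg_le_card_add_card hcover
  have hS_support := card_union_le S p.support.toFinset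
  have hedges_C := card_union_le (p.edges.map c).toFinset C
  have hsupport := p.support.toFinset_card_le
  have hedges := (p.edges.map c).toFinset_card_le
  rw [Walk.length_support] at hsupport
  rw [List.length_map, Walk.length_edges] at hedges
  lia

lemma exists_finset_rainbowPathAvoiding [Finite V] (G : SimpleGraph V) (c : Sym2 V → ℕ) (v : V)
    (C : Finset ℕ) (k : ℕ) :
    ∃ Y : Finset V, (∀ y ∈ Y, RainbowPathAvoiding G c v y (k + 2) C) ∧
      minColorDeg G c < #Y + 2 * (k + 1) + #C := by
  have extend {w : V} {m : ℕ} (hw : RainbowPathAvoiding G c v w m C) :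
      ∃ Y : Finset V, (∀ y ∈ Y, RainbowPathAvoiding G c v y (m + 1) C) ∧
        minColorDeg G c < #Y + 2 * m + #C :=
    ⟨(Set.toFinite {y | RainbowPathAvoiding G c v y (m + 1) C}).toFinset, by simp,
      (minColorDeg_le_colorDeg w).trans_lt (hw.colorDeg_lt (by simp))⟩
  induction k with
  | zero => exact extend ⟨Walk.nil, by simp, by simp, by simp, by simp⟩
  | succ k ih =>
    obtain ⟨Y, hY, hcard⟩ := ih
    rcases Y.eq_empty_or_nonempty with rfl | ⟨w, hw⟩
    · exact ⟨∅, by simp, by lia⟩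
    · exact extend (hY w hw)

lemma RainbowPathAvoiding.colorDeg_lt_of_not_hasRainbowCycle [Fintype V] [DecidableEq V]
    [DecidableRel G.Adj] {v y : V} {k α : ℕ} {A B : Finset V}
    (h : RainbowPathAvoiding G c v y k {α}) (hno : ¬ HasRainbowCycle G c (k + 1))
    (hA : ∀ x ∈ A, G.Adj x v ∧ c s(x, v) = α) (hB : ∀ x ∈ B, G.Adj x v)
    (hBinj : Set.InjOn (fun x => c s(x, v)) B) :
    colorDeg G c y < #(A ∪ B)ᶜ + #{x ∈ B | G.Adj x y ∧ c s(x, y) = c s(x, v)} + 3 * k := by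
  obtain ⟨p, hp, rfl, hrainbow, hα⟩ := h
  set T : Finset V := {x ∈ B | G.Adj x y ∧ c s(x, y) = c s(x, v)}
  let L : Finset ℕ := (p.edges.map c).toFinset
  let P : Finset V := {x ∈ B | c s(x, v) ∈ L}
  have hcover : ∀ x, G.Adj x y →
      x ∈ (A ∪ B)ᶜ ∪ T ∪ (p.support.toFinset ∪ P) ∨ c s(x, y) ∈ insert α L := by
    intro x hxy
    by_contra! hnot
    simp only [mem_union, mem_compl, mem_insert, List.mem_toFinset, not_or, L] at hnot
    obtain ⟨⟨⟨hxAB, hxT⟩, hxp, hxP⟩, hxα, hcy⟩ := hnot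
    rw [← or_iff_not_and_not] at hxAB
    have hxv : G.Adj x v := hxAB.elim (fun hx => (hA x hx).1) (hB x)
    have hcv : c s(x, v) ∉ p.edges.map c := by
      intro hmem
      rcases hxAB with hx | hx
      · obtain ⟨e, he, hce⟩ := List.mem_map.1 hmem
        exact hα e he (hce.trans (hA x hx).2)
      · exact hxP (mem_filter.2 ⟨hx, List.mem_toFinset.2 hmem⟩)
    have hne : c s(x, y) ≠ c s(x, v) := by
      intro heq
      rcases hxAB with hx | hx
      · exact hxα (heq.trans (hA x hx).2)
      · exact hxT (mem_filter.2 ⟨hx, hxy, heq⟩)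
    exact hno (hasRainbowCycle_of_isPath hp hrainbow hxp hxv hxy hcv hcy hne)
  have hcolors := colorDeg_le_card_add_card hcover
  have hP : #P ≤ #L := card_le_card_of_injOn (fun x => c s(x, v))
    (fun x hx => (mem_filter.1 hx).2) (hBinj.mono (filter_subset _ _))
  have hL : #L ≤ p.length := by simpa using (p.edges.map c).toFinset_card_le
  have hsupport : #p.support.toFinset ≤ p.length + 1 := by
    simpa using p.support.toFinset_card_le
  have hunion := card_union_le ((A ∪ B)ᶜ ∪ T) (p.support.toFinset ∪ P)
  have hunion_T := card_union_le (A ∪ B)ᶜ T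
  have hunion_P := card_union_le p.support.toFinset P
  have hinsert := card_insert_le α L
  lia

end RainbowPath

theorem stmt7_general (ℓ : ℕ) (hl : 3 ≤ ℓ) [Fintype V] (G : SimpleGraph V) (c : Sym2 V → ℕ)
    (hno : ¬ HasRainbowCycle G c ℓ) :
    2 * minColorDeg G c + 9 ≤ Fintype.card V + 5 * ℓ := by
  classical
  obtain ⟨k, rfl⟩ := Nat.exists_eq_add_of_le' hl
  rcases isEmpty_or_nonempty V with hV | hV
  · rw [minColorDeg, Nat.iInf_of_empty]
    lia
  by_contra! hlarge
  obtain ⟨v, α, A, hA, hAcard⟩ := exists_card_eq_repNum G c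
  obtain ⟨B, hB, hBinj, hBcard⟩ := exists_injOn_color_ne G c v α
  obtain ⟨Y, hY, hYcard⟩ := exists_finset_rainbowPathAvoiding G c v {α} k
  have hABcard : #(A ∪ B)ᶜ + (#A + #B) = Fintype.card V := by
    have hAB : Disjoint A B := disjoint_left.2 fun x hxA hxB => (hB x hxB).2 (hA x hxA).2
    rw [← card_union_of_disjoint hAB, card_compl_add_card]
  have hδv : minColorDeg G c ≤ colorDeg G c v := minColorDeg_le_colorDeg v
  obtain ⟨m, hm⟩ : ∃ m, minColorDeg G c + 1 = #(A ∪ B)ᶜ + 3 * (k + 2) + m :=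
    Nat.exists_eq_add_of_le (by lia)
  have hcount : #Y * m ≤ #B * repNum G c := by
    refine card_mul_le_card_mul_repNum (v := v) fun y hy => ?_
    have hpath : RainbowPathAvoiding G c v y (k + 2) {α} := by simpa using hY y hy
    have hδy : minColorDeg G c ≤ colorDeg G c y := minColorDeg_le_colorDeg y
    have := hpath.colorDeg_lt_of_not_hasRainbowCycle hno hA (fun x hx => (hB x hx).1) hBinj
    lia
  rw [card_singleton] at hYcard
  have hRY : repNum G c < #Y := by lia
  have hRm : repNum G c < m := by lia
  have hlt : repNum G c * #B < #Y * m := mul_lt_mul_of_add_le_add hRY hRm (by lia)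
  exact (hcount.trans_eq (mul_comm _ _)).not_gt hlt

theorem stmt7 (ℓ : ℕ) (hl : 3 ≤ ℓ) [Fintype V] (G : SimpleGraph V) (c : Sym2 V → ℕ)
    (hno : ¬ HasRainbowCycle G c ℓ) :
    (minColorDeg G c : ℚ) ≤ (Fintype.card V : ℚ) / 2 + 3 * ℓ := by
  have h : (2 * minColorDeg G c + 9 : ℚ) ≤ Fintype.card V + 5 * ℓ :=
    mod_cast stmt7_general ℓ hl G c hno
  linarith [(ℓ.cast_nonneg : (0 : ℚ) ≤ ℓ)]
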